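/- Let η : ℝ → (0,∞) be C² and 1-periodic, and let ψ(x,z) = ∂ₓη(x)·χ(z/η(x)) with χ(s) = s²(3 − 2s). Then for every x and every z ∈ [0, η(x)]: |∂_zψ(x,z)| ≤ (3/2)·|∂ₓη(x)|/η(x), and |∂ₓψ(x,z)| ≤ |∂ₓ²η(x)| + (3/2)·(∂ₓη(x))²/η(x). In particular, if additionally |∂ₓη(x)| ≤ ε ≤ 1 for all x, then |∇ψ(x,z)| ≤ 3·( |∂ₓ²η(x)| + ε/η(x) ). -/

import Mathlib

open MeasureTheory Set

noncomputable section

/-- The cut-off function `χ(s) = s²(3 − 2s)`. -/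
def cutoff (s : ℝ) : ℝ := s ^ 2 * (3 - 2 * s)

/-- The stream function `ψ(x,z) = ∂ₓη(x)·χ(z/η(x))`. -/
def stream (η : ℝ → ℝ) (p : ℝ × ℝ) : ℝ := deriv η p.1 * cutoff (p.2 / η p.1)

lemma cutoff_hasDerivAt (s : ℝ) : HasDerivAt cutoff (6 * s * (1 - s)) s := by
  have h := ((hasDerivAt_id s).pow 2).mul (((hasDerivAt_id s).const_mul 2).const_sub 3)
  refine (h.congr_deriv ?_)
  simp
  ring

lemma cutoff_deriv_bound (s : ℝ) (h0 : 0 ≤ s) (h1 : s ≤ 1) :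
    |6 * s * (1 - s)| ≤ 3 / 2 := by
  rw [abs_le]
  constructor
  · nlinarith
  · nlinarith [sq_nonneg (2 * s - 1)]

lemma cutoff_bound (s : ℝ) (h0 : 0 ≤ s) (h1 : s ≤ 1) : |cutoff s| ≤ 1 := by
  unfold cutoff
  rw [abs_le]
  constructor
  · nlinarith [sq_nonneg s, mul_nonneg (sq_nonneg s) (sub_nonneg.2 h1)]
  · nlinarith [mul_nonneg (sq_nonneg (1 - s)) (by linarith : (0:ℝ) ≤ 1 + 2 * s)]

/-- pointwise gradient estimate (3.5) of Lemma 3.3, with explicit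
constants. For a positive, C², 1-periodic `η` and the stream function
`ψ(x,z) = ∂ₓη(x)·χ(z/η(x))` one has, for `0 ≤ z ≤ η(x)`:
`|∂_zψ| ≤ (3/2)|∂ₓη|/η` and `|∂ₓψ| ≤ |∂ₓ²η| + (3/2)(∂ₓη)²/η`; in particular, if
`|∂ₓη| ≤ ε ≤ 1` everywhere then `|∇ψ| ≤ 3(|∂ₓ²η| + ε/η)`. -/
theorem stmt_9 (η : ℝ → ℝ) (hη : ContDiff ℝ 2 η) (hper : ∀ x, η (x + 1) = η x)
    (hpos : ∀ x, 0 < η x) :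
    (∀ x z : ℝ, z ∈ Icc 0 (η x) →
        |deriv (fun z' => stream η (x, z')) z| ≤ 3 / 2 * |deriv η x| / η x)
    ∧ (∀ x z : ℝ, z ∈ Icc 0 (η x) →
        |deriv (fun x' => stream η (x', z)) x|
          ≤ |deriv (deriv η) x| + 3 / 2 * (deriv η x) ^ 2 / η x)
    ∧ ∀ ε : ℝ, (∀ x, |deriv η x| ≤ ε) → ε ≤ 1 →
        ∀ x z : ℝ, z ∈ Icc 0 (η x) →
          Real.sqrt ((deriv (fun x' => stream η (x', z)) x) ^ 2
              + (deriv (fun z' => stream η (x, z')) z) ^ 2)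
            ≤ 3 * (|deriv (deriv η) x| + ε / η x) := by
  have key1 : ∀ x z : ℝ, z ∈ Icc 0 (η x) →
      |deriv (fun z' => stream η (x, z')) z| ≤ 3 / 2 * |deriv η x| / η x := by
    intro x z hz
    have hp := hpos x
    have h0 : 0 ≤ z / η x := div_nonneg hz.1 hp.le
    have h1 : z / η x ≤ 1 := (div_le_one hp).2 hz.2
    have hd : HasDerivAt (fun z' => stream η (x, z'))
        (deriv η x * (6 * (z / η x) * (1 - z / η x) * (1 / η x))) z := by
      have h := ((cutoff_hasDerivAt (z / η x)).comp z
        ((hasDerivAt_id z).div_const (η x))).const_mul (deriv η x)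
      exact h
    rw [hd.deriv, abs_mul, abs_mul, abs_of_pos (one_div_pos.2 hp)]
    have hb := cutoff_deriv_bound _ h0 h1
    calc _ ≤ |deriv η x| * (3 / 2 * (1 / η x)) := by gcongr
      _ = _ := by ring
  have key2 : ∀ x z : ℝ, z ∈ Icc 0 (η x) →
      |deriv (fun x' => stream η (x', z)) x|
        ≤ |deriv (deriv η) x| + 3 / 2 * (deriv η x) ^ 2 / η x := by
    intro x z hz
    have hp := hpos x
    have h0 : 0 ≤ z / η x := div_nonneg hz.1 hp.le
    have h1 : z / η x ≤ 1 := (div_le_one hp).2 hz.2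
    have hd1 : HasDerivAt η (deriv η x) x :=
      (hη.differentiable (by norm_num) x).hasDerivAt
    have hη' : ContDiff ℝ 1 (deriv η) := by
      have h2 : ContDiff ℝ (1 + 1) η := by
        convert hη using 1
        norm_num
      exact (contDiff_succ_iff_deriv.1 h2).2.2
    have hd2 : HasDerivAt (deriv η) (deriv (deriv η) x) x :=
      (hη'.differentiable (by norm_num) x).hasDerivAt
    have hq : HasDerivAt (fun x' => z / η x') ((0 * η x - z * deriv η x) / η x ^ 2) x :=
      (hasDerivAt_const x z).div hd1 hp.ne'
    have hd : HasDerivAt (fun x' => stream η (x', z))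
        (deriv (deriv η) x * cutoff (z / η x) + deriv η x *
          (6 * (z / η x) * (1 - z / η x) * ((0 * η x - z * deriv η x) / η x ^ 2))) x := by
      have h := (cutoff_hasDerivAt (z / η x)).comp x hq
      exact hd2.mul h
    have hb := cutoff_deriv_bound _ h0 h1
    have hc := cutoff_bound _ h0 h1
    have e : deriv η x *
          (6 * (z / η x) * (1 - z / η x) * ((0 * η x - z * deriv η x) / η x ^ 2))
        = -((6 * (z / η x) * (1 - z / η x)) * ((z / η x) * (deriv η x ^ 2 / η x))) := by
      field_simp
      ring
    rw [hd.deriv, e]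
    have hr : 0 ≤ deriv η x ^ 2 / η x := by positivity
    refine (abs_add_le _ _).trans (add_le_add ?_ ?_)
    · rw [abs_mul]
      exact mul_le_of_le_one_right (abs_nonneg _) hc
    · rw [abs_neg, abs_mul, abs_of_nonneg (mul_nonneg h0 hr)]
      calc _ ≤ 3 / 2 * (1 * (deriv η x ^ 2 / η x)) := by gcongr
        _ = _ := by ring
  refine ⟨key1, key2, ?_⟩
  intro ε hε hε1 x z hz
  have hp := hpos x
  have k1 := key1 x z hz
  have k2 := key2 x z hz
  have he := hε x
  have he0 : 0 ≤ ε := (abs_nonneg _).trans he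
  have b1 : 3 / 2 * |deriv η x| / η x ≤ 3 / 2 * ε / η x := by gcongr
  have b2 : 3 / 2 * (deriv η x) ^ 2 / η x ≤ 3 / 2 * ε / η x := by
    have : (deriv η x) ^ 2 ≤ ε := by
      rw [← sq_abs]
      nlinarith [abs_nonneg (deriv η x)]
    gcongr
  have e3 : 3 / 2 * ε / η x = 3 / 2 * (ε / η x) := by ring
  rw [e3] at b1 b2
  have hn := abs_nonneg (deriv (deriv η) x)
  set a := deriv (fun x' => stream η (x', z)) x
  set b := deriv (fun z' => stream η (x, z')) z
  have hs : Real.sqrt (a ^ 2 + b ^ 2) ≤ |a| + |b| := by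
    apply Real.sqrt_le_iff.2
    refine ⟨by positivity, ?_⟩
    nlinarith [sq_abs a, sq_abs b, mul_nonneg (abs_nonneg a) (abs_nonneg b)]
  linarith

end
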